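/- Let V ⊆ ℝ² be open and z : V → ℝ³ a smooth nonvanishing map, and consider the closed ℝ³-valued 2-form Ω = z(u¹,u²) du¹ ∧ du² on M = V × ℝ ⊆ ℝ³. Suppose that either (i) there exists a nonzero constant vector c ∈ ℝ³ with ⟨c, z(p)⟩ = 0 for all p ∈ V (the image of the projectivized map [[z]] : V → ℝP² lies in a line), or (ii) for every p ∈ V there exists w ∈ ℝ² with z(p) × (Dz(p)·w) ≠ 0 (the differential of [[z]] is nonvanishing). Then every point of M has an open neighborhood U on which there exist a smooth map a : U → SO(3) whose differential Da(q) has rank exactly 1 at every q ∈ U, and a smooth map x : U → ℝ³, such that the matrix W(q) = a(q)⁻¹ · Dx(q) is invertible at every q ∈ U and satisfies dω = Ω, namely for each i: ∂₁W_{i2} − ∂₂W_{i1} = zⁱ(u¹,u²), ∂₂W_{i3} − ∂₃W_{i2} = 0, and ∂₃W_{i1} − ∂₁W_{i3} = 0 on U. -/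

import Mathlib

open Matrix

noncomputable section

/-- Partial derivative in the `j`-th coordinate direction. -/
def pd {m : ℕ} {F : Type*} [NormedAddCommGroup F] [NormedSpace ℝ F]
    (j : Fin m) (f : (Fin m → ℝ) → F) (u : Fin m → ℝ) : F :=
  fderiv ℝ f u (Pi.single j 1)

/-- The special orthogonal group SO(3), as a set of 3×3 real matrices. -/
def SO3 : Set (Matrix (Fin 3) (Fin 3) ℝ) :=
  {A | Aᵀ * A = 1 ∧ A.det = 1}

/-- The skew-symmetric matrix `[v]` associated to `v ∈ ℝ³`, with `[v] w = w × v`. -/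
def crossMat (v : Fin 3 → ℝ) : Matrix (Fin 3) (Fin 3) ℝ :=
  !![0, v 2, -(v 1); -(v 2), 0, v 0; v 1, -(v 0), 0]

/-- The Jacobian matrix of a map `x : ℝ³ → ℝ³`. -/
def jacobian (x : (Fin 3 → ℝ) → (Fin 3 → ℝ)) (u : Fin 3 → ℝ) :
    Matrix (Fin 3) (Fin 3) ℝ :=
  Matrix.of fun i j => pd j x u i

/-- `W(u) = a(u)⁻¹ · Dx(u)`, the coefficient matrix of the coframing `ω = a⁻¹ dx`. -/
def Wmat (a : (Fin 3 → ℝ) → Matrix (Fin 3) (Fin 3) ℝ)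
    (x : (Fin 3 → ℝ) → (Fin 3 → ℝ)) (u : Fin 3 → ℝ) : Matrix (Fin 3) (Fin 3) ℝ :=
  (a u)⁻¹ * jacobian x u

/-- The tableau `A_Q`: the span of the matrices `[x] + [y] Q`. -/
def tableau (Q : Matrix (Fin 3) (Fin 3) ℝ) : Submodule ℝ (Matrix (Fin 3) (Fin 3) ℝ) :=
  Submodule.span ℝ {M | ∃ x y : Fin 3 → ℝ, M = crossMat x + crossMat y * Q}

end

/-!
We look for a coframing `ω = a⁻¹ dx` with `a = α(t(u¹, u²))` for a curve `α` of rotations, and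
`x = y(u¹, u²) + (u³ - c) n(t)` ruled by lines. Then `dω = (α'(t))ᵀ dt ∧ dx`, which equals `Ω`
once `α'(θ)ᵀ n(θ) = 0` and `(α'(t))ᵀ (dt ∧ dy) = Ω`. The latter prescribes the single coefficient
of `dt ∧ dy`, which is achieved by integrating in coordinates `(t, b)` with `dt ∧ db ≠ 0`.

The kernel condition leaves one obstruction: `z` must lie in the range of `(α'(t))ᵀ`, the plane
orthogonal to the body axis of the rotation speed. For `α(θ) = exp(θ([c] - Y)) exp(θY)` with `Y`
skew, this axis is `exp(-θY) c`. If `z` stays in the plane `c^⊥`, take `Y = 0` and `t = u¹`.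
If the direction of `z` moves at `p₀`, let `exp(-θY) c` run through the plane spanned by `z(p₀)` and
its velocity, starting orthogonally to `z(p₀)`; then `⟨exp(-tY) c, z⟩ = 0` is solved by a function
`t` with `dt ≠ 0`.
-/

noncomputable section

open Filter Topology
open scoped ContDiff

/-! ### Primitives in the last variable and local inverses -/

section

open MeasureTheory Set

variable {E F : Type*} [NormedAddCommGroup E] [NormedSpace ℝ E]
  [NormedAddCommGroup F] [NormedSpace ℝ F]

theorem exists_contDiff_hasCompactSupport_eventuallyEq [FiniteDimensional ℝ E]
    {f : E → F} {c : E} (hf : ∀ᶠ x in 𝓝 c, ContDiffAt ℝ ∞ f x) :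
    ∃ g : E → F, ContDiff ℝ ∞ g ∧ HasCompactSupport g ∧ g =ᶠ[𝓝 c] f := by
  obtain ⟨ε, hε, hball⟩ := Metric.eventually_nhds_iff_ball.1 hf
  let χ : ContDiffBump c := ⟨ε / 4, ε / 2, by positivity, by linarith⟩
  refine ⟨fun x => χ x • f x, contDiff_iff_contDiffAt.2 fun x => ?_,
    χ.hasCompactSupport.smul_right, ?_⟩
  · by_cases hx : x ∈ tsupport χ
    · rw [χ.tsupport_eq] at hx
      exact χ.contDiffAt.smul (hball x (Metric.closedBall_subset_ball (half_lt_self hε) hx))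
    · refine contDiffAt_const (c := 0) |>.congr_of_eventuallyEq ?_
      filter_upwards [notMem_tsupport_iff_eventuallyEq.1 hx] with y hy
      simp [hy]
  · filter_upwards [χ.eventuallyEq_one] with x hx
    simp [hx]

theorem contDiff_integral_Iic {K : E × ℝ → F} {k : Set ℝ}
    (hK : ContDiff ℝ ∞ K) (hk : IsCompact k) (hsupp : ∀ p, ∀ r ∉ k, K (p, r) = 0) :
    ContDiff ℝ ∞ fun q : E × ℝ => ∫ r in Iic q.2, K (q.1, r) := by
  let H : ℝ → ℝ := indicator (Ici 0) 1
  have hH : LocallyIntegrable H volume :=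
    (locallyIntegrable_const (1 : ℝ)).indicator measurableSet_Ici
  have hconv := contDiffOn_convolution_right_with_param (n := ⊤) (μ := volume)
    (ContinuousLinearMap.lsmul ℝ ℝ : ℝ →L[ℝ] F →L[ℝ] F) (g := fun p r => K (p, r))
    isOpen_univ hk (fun p r _ hr => hsupp p r hr) hH (by exact hK.contDiffOn)
  rw [univ_prod_univ, contDiffOn_univ] at hconv
  convert hconv using 2 with q
  rw [convolution, ← integral_sub_left_eq_self _ volume q.2, ← integral_indicator measurableSet_Iic]
  congr 1 with r
  by_cases hr : r ≤ q.2 <;> simp [H, indicator, hr]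

theorem hasDerivAt_integral_Iic [CompleteSpace F] {f : ℝ → F} (hf : Continuous f)
    (hint : Integrable f) (s : ℝ) :
    HasDerivAt (fun s => ∫ r in Iic s, f r) (f s) s := by
  have hsplit : (fun s' => ∫ r in Iic s', f r) =
      fun s' => (∫ r in Iic s, f r) + ∫ r in s..s', f r := by
    ext s'
    rw [← intervalIntegral.integral_Iic_sub_Iic hint.integrableOn hint.integrableOn]
    abel
  rw [hsplit]
  exact (intervalIntegral.integral_hasDerivAt_right (hf.intervalIntegrable _ _)
    (hf.stronglyMeasurableAtFilter _ _) hf.continuousAt).const_add _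

theorem exists_contDiff_fderiv_snd_eq [FiniteDimensional ℝ E] [CompleteSpace F]
    {f : E × ℝ → F} {c : E × ℝ} (hf : ∀ᶠ q in 𝓝 c, ContDiffAt ℝ ∞ f q) :
    ∃ Y : E × ℝ → F, ContDiff ℝ ∞ Y ∧ ∀ᶠ q in 𝓝 c, fderiv ℝ Y q (0, 1) = f q := by
  obtain ⟨K, hK, hKc, hKf⟩ := exists_contDiff_hasCompactSupport_eventuallyEq hf
  have hk : IsCompact (Prod.snd '' tsupport K) := hKc.isCompact.image continuous_snd
  have hsupp : ∀ p, ∀ r ∉ Prod.snd '' tsupport K, K (p, r) = 0 := fun p r hr =>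
    image_eq_zero_of_notMem_tsupport fun h => hr ⟨_, h, rfl⟩
  have hY := contDiff_integral_Iic hK hk hsupp
  refine ⟨_, hY, hKf.mono fun ⟨p, s⟩ hq => ?_⟩
  have hKp : Continuous fun r => K (p, r) := hK.continuous.comp (by fun_prop)
  have hint : Integrable fun r => K (p, r) :=
    hKp.integrable_of_hasCompactSupport (.intro hk (hsupp p))
  have hline : HasDerivAt (fun s : ℝ => (p, s)) (0, 1) s :=
    (hasDerivAt_const s p).prodMk (hasDerivAt_id s)
  have hchain := (hY.differentiable (by simp) (p, s)).hasFDerivAt.comp_hasDerivAt s hline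
  exact (hchain.unique (hasDerivAt_integral_Iic hKp hint s)).trans hq

theorem exists_contDiffAt_localInverse [CompleteSpace E] {φ : E → F} {p₀ : E}
    (hφ : ∀ᶠ p in 𝓝 p₀, ContDiffAt ℝ ∞ φ p) (hinv : (fderiv ℝ φ p₀).IsInvertible) :
    ∃ ψ : F → E, Tendsto ψ (𝓝 (φ p₀)) (𝓝 p₀) ∧
      (∀ᶠ q in 𝓝 (φ p₀), ContDiffAt ℝ ∞ ψ q) ∧ ∀ᶠ p in 𝓝 p₀, ψ (φ p) = p := by
  obtain ⟨e₀, he₀⟩ := hinv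
  have hp₀ := hφ.self_of_nhds
  let e := hp₀.toOpenPartialHomeomorph φ
    (he₀ ▸ (hp₀.differentiableAt (by simp)).hasFDerivAt) (by simp)
  have hsrc : p₀ ∈ e.source := hp₀.mem_toOpenPartialHomeomorph_source _ (by simp)
  have hlim : Tendsto e.symm (𝓝 (φ p₀)) (𝓝 p₀) := e.tendsto_symm hsrc
  have hequiv : ∀ᶠ p in 𝓝 p₀, (fderiv ℝ φ p).IsInvertible :=
    (hp₀.fderiv_right (m := ∞) le_rfl).continuousAt (he₀ ▸ e₀.nhds)
  refine ⟨e.symm, hlim, ?_, e.eventually_left_inverse hsrc⟩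
  filter_upwards [e.open_target.mem_nhds (e.map_source hsrc), hlim.eventually hφ,
    hlim.eventually hequiv] with q hq hφq ⟨e', he'⟩
  exact e.contDiffAt_symm hq (he' ▸ (hφq.differentiableAt (by simp)).hasFDerivAt) hφq

end

/-! ### Two-forms `dt ∧ dy` -/

section

variable {m : ℕ} {F : Type*} [NormedAddCommGroup F] [NormedSpace ℝ F]

/-- The coefficient of `duⁱ ∧ duʲ` in the `F`-valued 2-form `dt ∧ dy`. -/
def wedgeCoeff (i j : Fin m) (t : (Fin m → ℝ) → ℝ) (y : (Fin m → ℝ) → F)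
    (u : Fin m → ℝ) : F :=
  pd i t u • pd j y u - pd j t u • pd i y u

theorem contDiffAt_pd {f : (Fin m → ℝ) → F} {u : Fin m → ℝ} (hf : ContDiffAt ℝ ∞ f u)
    (j : Fin m) : ContDiffAt ℝ ∞ (pd j f) u :=
  (hf.fderiv_right le_rfl).clm_apply contDiffAt_const

theorem fderiv_apply_eq_sum_pd {f : (Fin m → ℝ) → F} {u : Fin m → ℝ} (v : Fin m → ℝ) :
    fderiv ℝ f u v = ∑ j, v j • pd j f u := by
  conv_lhs => rw [pi_eq_sum_univ' v]
  simp [pd]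

theorem contDiffAt_wedgeCoeff {t : (Fin m → ℝ) → ℝ} {y : (Fin m → ℝ) → F} {u : Fin m → ℝ}
    (ht : ContDiffAt ℝ ∞ t u) (hy : ContDiffAt ℝ ∞ y u) (i j : Fin m) :
    ContDiffAt ℝ ∞ (wedgeCoeff i j t y) u :=
  ((contDiffAt_pd ht i).smul (contDiffAt_pd hy j)).sub
    ((contDiffAt_pd ht j).smul (contDiffAt_pd hy i))

theorem pd_add_smul_const {t : (Fin m → ℝ) → ℝ} {y : (Fin m → ℝ) → F} {u : Fin m → ℝ}
    (ht : DifferentiableAt ℝ t u) (hy : DifferentiableAt ℝ y u) (k : F) (j : Fin m) :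
    pd j (fun v => y v + t v • k) u = pd j y u + pd j t u • k := by
  simp only [pd]
  rw [fderiv_fun_add hy (ht.smul_const k), fderiv_smul_const ht]
  simp

theorem wedgeCoeff_add_smul_const {t : (Fin m → ℝ) → ℝ} {y : (Fin m → ℝ) → F} {u : Fin m → ℝ}
    (ht : DifferentiableAt ℝ t u) (hy : DifferentiableAt ℝ y u) (k : F) (i j : Fin m) :
    wedgeCoeff i j t (fun v => y v + t v • k) u = wedgeCoeff i j t y u := by
  simp only [wedgeCoeff, pd_add_smul_const ht hy]
  module

theorem wedgeCoeff_comp_prodMk {t b : (Fin m → ℝ) → ℝ} {Y : ℝ × ℝ → F} {u : Fin m → ℝ}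
    (ht : DifferentiableAt ℝ t u) (hb : DifferentiableAt ℝ b u)
    (hY : DifferentiableAt ℝ Y (t u, b u)) (i j : Fin m) :
    wedgeCoeff i j t (fun v => Y (t v, b v)) u =
      wedgeCoeff i j t b u • fderiv ℝ Y (t u, b u) (0, 1) := by
  have hpd : ∀ k, pd k (fun v => Y (t v, b v)) u =
      pd k t u • fderiv ℝ Y (t u, b u) (1, 0) + pd k b u • fderiv ℝ Y (t u, b u) (0, 1) := by
    intro k
    have hchain := hY.hasFDerivAt.comp u (ht.hasFDerivAt.prodMk hb.hasFDerivAt)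
    have hfd : fderiv ℝ (fun v => Y (t v, b v)) u = _ := hchain.fderiv
    simp only [pd, hfd, ← map_smul, ← map_add]
    simp
  simp only [wedgeCoeff, hpd, smul_eq_mul]
  module

end

theorem isInvertible_fderiv_prodMk {t b : (Fin 2 → ℝ) → ℝ} {p : Fin 2 → ℝ}
    (ht : DifferentiableAt ℝ t p) (hb : DifferentiableAt ℝ b p) (h : wedgeCoeff 0 1 t b p ≠ 0) :
    (fderiv ℝ (fun q => (t q, b q)) p).IsInvertible := by
  rw [ht.fderiv_prodMk hb]
  have hinj : Function.Injective
      ((fderiv ℝ t p).prod (fderiv ℝ b p) : (Fin 2 → ℝ) →ₗ[ℝ] ℝ × ℝ) := by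
    refine (injective_iff_map_eq_zero _).2 fun v hv => ?_
    have htv : fderiv ℝ t p v = 0 := congrArg Prod.fst hv
    have hbv : fderiv ℝ b p v = 0 := congrArg Prod.snd hv
    simp only [fderiv_apply_eq_sum_pd, Fin.sum_univ_two, smul_eq_mul] at htv hbv
    simp only [wedgeCoeff, smul_eq_mul] at h
    have h0 : v 0 = 0 := (mul_eq_zero.1 (by linear_combination pd 1 b p * htv - pd 1 t p * hbv :
      v 0 * (pd 0 t p * pd 1 b p - pd 1 t p * pd 0 b p) = 0)).resolve_right h
    have h1 : v 1 = 0 := (mul_eq_zero.1 (by linear_combination pd 0 t p * hbv - pd 0 b p * htv :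
      v 1 * (pd 0 t p * pd 1 b p - pd 1 t p * pd 0 b p) = 0)).resolve_right h
    ext i; fin_cases i <;> simp [h0, h1]
  exact ⟨(LinearEquiv.ofInjectiveOfFinrankEq _ hinj (by simp)).toContinuousLinearEquiv,
    by ext v <;> rfl⟩

theorem exists_clm_wedgeCoeff_ne_zero {t : (Fin 2 → ℝ) → ℝ} {p : Fin 2 → ℝ}
    (h : fderiv ℝ t p ≠ 0) : ∃ b : (Fin 2 → ℝ) →L[ℝ] ℝ, wedgeCoeff 0 1 t b p ≠ 0 := by
  contrapose! h
  have h0 : pd 0 t p = 0 := by simpa [wedgeCoeff, pd] using h (.proj 1)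
  have h1 : pd 1 t p = 0 := by simpa [wedgeCoeff, pd] using h (.proj 0)
  ext v
  simp [fderiv_apply_eq_sum_pd, h0, h1]

theorem exists_wedgeCoeff_eq {F : Type*} [NormedAddCommGroup F] [NormedSpace ℝ F] [CompleteSpace F]
    {t : (Fin 2 → ℝ) → ℝ} {G : (Fin 2 → ℝ) → F} {p₀ : Fin 2 → ℝ}
    (ht : ∀ᶠ p in 𝓝 p₀, ContDiffAt ℝ ∞ t p) (hdt : fderiv ℝ t p₀ ≠ 0)
    (hG : ∀ᶠ p in 𝓝 p₀, ContDiffAt ℝ ∞ G p) :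
    ∃ y : (Fin 2 → ℝ) → F, (∀ᶠ p in 𝓝 p₀, ContDiffAt ℝ ∞ y p) ∧
      ∀ᶠ p in 𝓝 p₀, wedgeCoeff 0 1 t y p = G p := by
  obtain ⟨b, hb₀⟩ := exists_clm_wedgeCoeff_ne_zero hdt
  have hbs : ∀ p, ContDiffAt ℝ ∞ b p := fun p => b.contDiff.contDiffAt
  have hφ : ∀ᶠ p in 𝓝 p₀, ContDiffAt ℝ ∞ (fun q => (t q, b q)) p :=
    ht.mono fun p hp => hp.prodMk (hbs p)
  obtain ⟨ψ, hψlim, hψ, hψφ⟩ := exists_contDiffAt_localInverse hφ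
    (isInvertible_fderiv_prodMk (ht.self_of_nhds.differentiableAt (by simp)) b.differentiableAt hb₀)
  let J := wedgeCoeff 0 1 t b
  have hJ : ∀ᶠ p in 𝓝 p₀, ContDiffAt ℝ ∞ J p :=
    ht.mono fun p hp => contDiffAt_wedgeCoeff hp (hbs p) 0 1
  have hJ0 : ∀ᶠ p in 𝓝 p₀, J p ≠ 0 := hJ.self_of_nhds.continuousAt.eventually_ne hb₀
  have hH : ∀ᶠ q in 𝓝 (t p₀, b p₀), ContDiffAt ℝ ∞ (fun q => (J (ψ q))⁻¹ • G (ψ q)) q := by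
    filter_upwards [hψ, hψlim.eventually hJ, hψlim.eventually hJ0, hψlim.eventually hG]
      with q hψq hJq hJ0q hGq
    exact ((hJq.comp q hψq).inv hJ0q).smul (hGq.comp q hψq)
  obtain ⟨Y, hY, hYH⟩ := exists_contDiff_fderiv_snd_eq hH
  refine ⟨fun p => Y (t p, b p), hφ.mono fun p hp => hY.contDiffAt.comp p hp, ?_⟩
  filter_upwards [ht, hJ0, hψφ, hφ.self_of_nhds.continuousAt.eventually hYH]
    with p htp hJ0p hψp hYp
  rw [wedgeCoeff_comp_prodMk (htp.differentiableAt (by simp)) b.differentiableAt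
    (hY.differentiable (by simp) _), hYp, hψp]
  exact smul_inv_smul₀ hJ0p (G p)

theorem dotProduct_cross_add_smul (y₀ y₁ n k : Fin 3 → ℝ) (t₀ t₁ : ℝ) :
    (y₀ + t₀ • k) ⬝ᵥ (y₁ + t₁ • k) ⨯₃ n =
      y₀ ⬝ᵥ y₁ ⨯₃ n + k ⬝ᵥ (t₀ • y₁ - t₁ • y₀) ⨯₃ n := by
  simp only [vec3_dotProduct, cross_apply, Pi.add_apply, Pi.smul_apply, Pi.sub_apply, smul_eq_mul,
    cons_val]
  ring

theorem exists_dotProduct_cross_add_smul_ne_zero {y₀ y₁ n : Fin 3 → ℝ} {t₀ t₁ : ℝ}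
    (h : (t₀ • y₁ - t₁ • y₀) ⨯₃ n ≠ 0) :
    ∃ k : Fin 3 → ℝ, (y₀ + t₀ • k) ⬝ᵥ (y₁ + t₁ • k) ⨯₃ n ≠ 0 := by
  simp only [dotProduct_cross_add_smul]
  by_cases h₀ : y₀ ⬝ᵥ y₁ ⨯₃ n = 0
  · exact ⟨_, by simpa only [h₀, zero_add] using dotProduct_self_eq_zero.not.2 h⟩
  · exact ⟨0, by simpa using h₀⟩

theorem exists_wedgeCoeff_eq_of_cross_ne_zero {t : (Fin 2 → ℝ) → ℝ}
    {G : (Fin 2 → ℝ) → Fin 3 → ℝ} {n : Fin 3 → ℝ} {p₀ : Fin 2 → ℝ}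
    (ht : ∀ᶠ p in 𝓝 p₀, ContDiffAt ℝ ∞ t p) (hdt : fderiv ℝ t p₀ ≠ 0)
    (hG : ∀ᶠ p in 𝓝 p₀, ContDiffAt ℝ ∞ G p) (hGn : G p₀ ⨯₃ n ≠ 0) :
    ∃ y : (Fin 2 → ℝ) → Fin 3 → ℝ, (∀ᶠ p in 𝓝 p₀, ContDiffAt ℝ ∞ y p) ∧
      (∀ᶠ p in 𝓝 p₀, wedgeCoeff 0 1 t y p = G p) ∧ pd 0 y p₀ ⬝ᵥ pd 1 y p₀ ⨯₃ n ≠ 0 := by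
  obtain ⟨y, hy, hyG⟩ := exists_wedgeCoeff_eq ht hdt hG
  rw [← hyG.self_of_nhds] at hGn
  obtain ⟨k, hk⟩ := exists_dotProduct_cross_add_smul_ne_zero hGn
  refine ⟨fun p => y p + t p • k, ?_, ?_, ?_⟩
  · filter_upwards [ht, hy] with p htp hyp
    exact hyp.add (htp.smul contDiffAt_const)
  · filter_upwards [ht, hy, hyG] with p htp hyp hyGp
    rw [wedgeCoeff_add_smul_const (htp.differentiableAt (by simp))
      (hyp.differentiableAt (by simp)), hyGp]
  · simpa only [pd_add_smul_const (ht.self_of_nhds.differentiableAt (by simp))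
      (hy.self_of_nhds.differentiableAt (by simp))] using hk

/-! ### Ruled maps -/

section

variable {m : ℕ} {F : Type*} [NormedAddCommGroup F] [NormedSpace ℝ F]

/-- The projection `(u¹, …, uᵐ⁺¹) ↦ (u¹, …, uᵐ)`. -/
def initCLM (m : ℕ) : (Fin (m + 1) → ℝ) →L[ℝ] (Fin m → ℝ) :=
  .pi fun i => .proj i.castSucc

theorem initCLM_single_castSucc (i : Fin m) :
    initCLM m (Pi.single i.castSucc 1) = Pi.single i 1 := by
  ext k
  simp [initCLM, Pi.single_apply]

theorem initCLM_single_last : initCLM m (Pi.single (Fin.last m) 1) = 0 := by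
  ext k
  simp [initCLM, Fin.castSucc_ne_last]

/-- The map `(u, s) ↦ y u + (s - c) • ν u`, affine in its last variable `s`. -/
def ruled (y ν : (Fin m → ℝ) → F) (c : ℝ) (q : Fin (m + 1) → ℝ) : F :=
  y (initCLM m q) + (q (Fin.last m) - c) • ν (initCLM m q)

variable {y ν : (Fin m → ℝ) → F} {c : ℝ} {q : Fin (m + 1) → ℝ}

theorem contDiffAt_ruled (hy : ContDiffAt ℝ ∞ y (initCLM m q))
    (hν : ContDiffAt ℝ ∞ ν (initCLM m q)) : ContDiffAt ℝ ∞ (ruled y ν c) q :=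
  (hy.comp q (initCLM m).contDiff.contDiffAt).add
    (((contDiff_apply ℝ ℝ (Fin.last m)).contDiffAt.sub contDiffAt_const).smul
      (hν.comp q (initCLM m).contDiff.contDiffAt))

theorem fderiv_ruled_apply (hy : DifferentiableAt ℝ y (initCLM m q))
    (hν : DifferentiableAt ℝ ν (initCLM m q)) (v : Fin (m + 1) → ℝ) :
    fderiv ℝ (ruled y ν c) q v = fderiv ℝ y (initCLM m q) (initCLM m v) +
      (q (Fin.last m) - c) • fderiv ℝ ν (initCLM m q) (initCLM m v) +
      v (Fin.last m) • ν (initCLM m q) := by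
  have hs : HasFDerivAt (fun q : Fin (m + 1) → ℝ => q (Fin.last m) - c) _ q :=
    (ContinuousLinearMap.proj (R := ℝ) (φ := fun _ => ℝ) (Fin.last m)).hasFDerivAt.sub_const c
  have hx : HasFDerivAt (ruled y ν c) _ q :=
    (hy.hasFDerivAt.comp q (initCLM m).hasFDerivAt).add
      (hs.smul (hν.hasFDerivAt.comp q (initCLM m).hasFDerivAt))
  rw [hx.fderiv]
  simp [add_assoc]

theorem pd_castSucc_ruled (hy : DifferentiableAt ℝ y (initCLM m q))
    (hν : DifferentiableAt ℝ ν (initCLM m q)) (i : Fin m) :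
    pd i.castSucc (ruled y ν c) q =
      pd i y (initCLM m q) + (q (Fin.last m) - c) • pd i ν (initCLM m q) := by
  simp only [pd, fderiv_ruled_apply hy hν, initCLM_single_castSucc]
  simp [(Fin.castSucc_ne_last i).symm]

theorem pd_last_ruled (hy : DifferentiableAt ℝ y (initCLM m q))
    (hν : DifferentiableAt ℝ ν (initCLM m q)) :
    pd (Fin.last m) (ruled y ν c) q = ν (initCLM m q) := by
  simp [pd, fderiv_ruled_apply hy hν, initCLM_single_last]

theorem pd_castSucc_comp_initCLM (hy : DifferentiableAt ℝ y (initCLM m q)) (i : Fin m) :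
    pd i.castSucc (y ∘ initCLM m) q = pd i y (initCLM m q) := by
  simp [pd, fderiv_comp q hy (initCLM m).differentiableAt, initCLM_single_castSucc]

theorem pd_last_comp_initCLM (hy : DifferentiableAt ℝ y (initCLM m q)) :
    pd (Fin.last m) (y ∘ initCLM m) q = 0 := by
  simp [pd, fderiv_comp q hy (initCLM m).differentiableAt, initCLM_single_last]

theorem wedgeCoeff_comp_self {n : ℝ → F} {t : (Fin m → ℝ) → ℝ} {u : Fin m → ℝ}
    (hn : DifferentiableAt ℝ n (t u)) (ht : DifferentiableAt ℝ t u) (i j : Fin m) :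
    wedgeCoeff i j t (n ∘ t) u = 0 := by
  simp only [wedgeCoeff, pd, fderiv_comp u hn ht, ContinuousLinearMap.comp_apply,
    fderiv_eq_smul_deriv]
  module

theorem wedgeCoeff_swap (i j : Fin m) (t : (Fin m → ℝ) → ℝ) (y : (Fin m → ℝ) → F)
    (u : Fin m → ℝ) : wedgeCoeff j i t y u = -wedgeCoeff i j t y u :=
  (neg_sub _ _).symm

section

variable {n : ℝ → F} {t : (Fin m → ℝ) → ℝ} (hy : DifferentiableAt ℝ y (initCLM m q))
  (ht : DifferentiableAt ℝ t (initCLM m q)) (hn : DifferentiableAt ℝ n (t (initCLM m q)))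
include hy ht hn

theorem wedgeCoeff_castSucc_ruled (i j : Fin m) :
    wedgeCoeff i.castSucc j.castSucc (t ∘ initCLM m) (ruled y (n ∘ t) c) q =
      wedgeCoeff i j t y (initCLM m q) := by
  have hnt := wedgeCoeff_comp_self hn ht i j
  simp only [wedgeCoeff] at hnt ⊢
  simp only [pd_castSucc_comp_initCLM ht, pd_castSucc_ruled hy (hn.comp _ ht)]
  linear_combination (norm := module) (q (Fin.last m) - c) • hnt

theorem wedgeCoeff_last_ruled (i : Fin m) :
    wedgeCoeff i.castSucc (Fin.last m) (t ∘ initCLM m) (ruled y (n ∘ t) c) q =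
      pd i t (initCLM m q) • n (t (initCLM m q)) := by
  simp [wedgeCoeff, pd_castSucc_comp_initCLM ht, pd_last_comp_initCLM ht,
    pd_last_ruled hy (hn.comp _ ht)]

end

end

/-! ### Coframings `a⁻¹ dx` with `a` of rank one -/

theorem inv_eq_transpose_of_mem_SO3 {A : Matrix (Fin 3) (Fin 3) ℝ} (hA : A ∈ SO3) : A⁻¹ = Aᵀ :=
  inv_eq_left_inv hA.1

theorem isUnit_det_Wmat_iff {a : (Fin 3 → ℝ) → Matrix (Fin 3) (Fin 3) ℝ}
    {x : (Fin 3 → ℝ) → Fin 3 → ℝ} {q : Fin 3 → ℝ} (ha : a q ∈ SO3) :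
    IsUnit (Wmat a x q).det ↔ (jacobian x q).det ≠ 0 := by
  rw [Wmat, inv_eq_transpose_of_mem_SO3 ha, det_mul, det_transpose, ha.2, one_mul,
    isUnit_iff_ne_zero]

theorem det_jacobian_eq_dotProduct_cross (x : (Fin 3 → ℝ) → Fin 3 → ℝ) (q : Fin 3 → ℝ) :
    (jacobian x q).det = pd 0 x q ⬝ᵥ pd 1 x q ⨯₃ pd 2 x q := by
  rw [triple_product_eq_det, ← det_transpose]
  congr 1
  ext i j
  fin_cases i <;> rfl

theorem continuousAt_det_jacobian {x : (Fin 3 → ℝ) → Fin 3 → ℝ} {q : Fin 3 → ℝ}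
    (hx : ContDiffAt ℝ ∞ x q) : ContinuousAt (fun v => (jacobian x v).det) q :=
  (continuous_id.matrix_det.continuousAt (x := jacobian x q)).comp
    (continuousAt_pi.2 fun i => continuousAt_pi.2 fun j =>
      continuousAt_pi.1 (contDiffAt_pd hx j).continuousAt i)

theorem pd_pd_comm {m : ℕ} {F : Type*} [NormedAddCommGroup F] [NormedSpace ℝ F]
    {f : (Fin m → ℝ) → F} {u : Fin m → ℝ} (hf : ContDiffAt ℝ ∞ f u) (i j : Fin m) :
    pd i (pd j f) u = pd j (pd i f) u := by
  have hsymm : IsSymmSndFDerivAt ℝ f u :=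
    hf.isSymmSndFDerivAt (by simpa using WithTop.coe_le_coe.2 (le_top : (2 : ℕ∞) ≤ ⊤))
  have hpd : ∀ i j, pd i (pd j f) u =
      fderiv ℝ (fderiv ℝ f) u (Pi.single i 1) (Pi.single j 1) := fun i j => by
    have hdf := (hf.fderiv_right (m := ∞) le_rfl).differentiableAt (by simp)
    change fderiv ℝ (fun v => fderiv ℝ f v (Pi.single j 1)) u (Pi.single i 1) = _
    simp [fderiv_clm_apply hdf]
  rw [hpd, hpd, hsymm]

theorem rank_vecMulVec_eq_one {m n K : Type*} [Fintype n] [Field K] {w : m → K}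
    {v : n → K} (hw : w ≠ 0) (hv : v ≠ 0) : (vecMulVec w v).rank = 1 := by
  classical
  refine le_antisymm (rank_vecMulVec_le w v) (Nat.one_le_iff_ne_zero.2 fun h => ?_)
  rw [rank, Submodule.finrank_eq_zero, LinearMap.range_eq_bot, ← toLin'_apply',
    map_eq_zero_iff _ toLin'.injective] at h
  obtain ⟨i, hi⟩ := Function.ne_iff.1 hw
  obtain ⟨j, hj⟩ := Function.ne_iff.1 hv
  exact mul_ne_zero hi hj (congrFun₂ h i j)

section

variable {T : (Fin 3 → ℝ) → ℝ} {α : ℝ → Matrix (Fin 3) (Fin 3) ℝ}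
  {A : Matrix (Fin 3) (Fin 3) ℝ} {q : Fin 3 → ℝ} (hT : DifferentiableAt ℝ T q)
  (hα : ∀ i j, HasDerivAt (fun θ => α θ i j) (A i j) (T q))
include hT hα

theorem hasFDerivAt_entry_comp (i j : Fin 3) :
    HasFDerivAt (fun v => α (T v) i j) (A i j • fderiv ℝ T q) q :=
  (hα i j).comp_hasFDerivAt q hT.hasFDerivAt

theorem pd_entry_comp (i j k : Fin 3) :
    pd k (fun v => α (T v) i j) q = A i j * pd k T q := by
  simp [pd, (hasFDerivAt_entry_comp hT hα i j).fderiv]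

theorem rank_pd_entry_comp (hA : A ≠ 0) (hdT : fderiv ℝ T q ≠ 0) :
    (Matrix.of fun (ik : Fin 3 × Fin 3) (j : Fin 3) =>
      pd j (fun v => α (T v) ik.1 ik.2) q).rank = 1 := by
  have hvec : (Matrix.of fun (ik : Fin 3 × Fin 3) (j : Fin 3) =>
      pd j (fun v => α (T v) ik.1 ik.2) q) =
      vecMulVec (fun ik => A ik.1 ik.2) fun j => pd j T q := by
    ext ik j
    exact pd_entry_comp hT hα ik.1 ik.2 j
  rw [hvec]
  refine rank_vecMulVec_eq_one (fun h => hA ?_) fun h => hdT ?_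
  · ext i k
    exact congrFun h (i, k)
  · ext v
    simp [fderiv_apply_eq_sum_pd, congrFun h _]

theorem pd_Wmat_sub_pd_Wmat {x : (Fin 3 → ℝ) → Fin 3 → ℝ} (hx : ContDiffAt ℝ ∞ x q)
    (hSO : ∀ θ, α θ ∈ SO3) (i j l : Fin 3) :
    pd l (fun v => Wmat (α ∘ T) x v i j) q - pd j (fun v => Wmat (α ∘ T) x v i l) q =
      (Aᵀ *ᵥ wedgeCoeff l j T x q) i := by
  have hpd : ∀ l j, pd l (fun v => Wmat (α ∘ T) x v i j) q =
      ∑ k, (α (T q) k i * pd l (pd j x) q k + A k i * pd l T q * pd j x q k) := by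
    intro l j
    have hW : (fun v => Wmat (α ∘ T) x v i j) = fun v => ∑ k, α (T v) k i * pd j x v k := by
      ext v
      rw [Wmat, Function.comp_apply, inv_eq_transpose_of_mem_SO3 (hSO _)]
      rfl
    have hx' : HasFDerivAt (pd j x) (fderiv ℝ (pd j x) q) q :=
      ((contDiffAt_pd hx j).differentiableAt (by simp)).hasFDerivAt
    have hsum := HasFDerivAt.fun_sum (u := Finset.univ) fun k _ =>
      (hasFDerivAt_entry_comp hT hα k i).fun_mul (hasFDerivAt_pi'.1 hx' k)
    rw [hW, pd, hsum.fderiv]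
    simp [pd, mul_comm]
  rw [hpd, hpd, ← Finset.sum_sub_distrib, mulVec, dotProduct]
  refine Finset.sum_congr rfl fun k _ => ?_
  simp only [pd_pd_comm hx l j, wedgeCoeff, transpose_apply, Pi.sub_apply, Pi.smul_apply,
    smul_eq_mul]
  ring

end

/-- `ω = a⁻¹ dx` satisfies at `q` all the requirements on a coframing with `a` of rank one and
`dω = z(u¹, u²) du¹ ∧ du²`: smoothness, `a ∈ SO(3)`, `rank Da = 1`, linear independence of the
components of `ω`, and the structure equation. -/
structure IsRankOneCoframingAt (z : (Fin 2 → ℝ) → Fin 3 → ℝ)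
    (a : (Fin 3 → ℝ) → Matrix (Fin 3) (Fin 3) ℝ) (x : (Fin 3 → ℝ) → Fin 3 → ℝ)
    (q : Fin 3 → ℝ) : Prop where
  contDiffAt_frame : ∀ i k, ContDiffAt ℝ ∞ (fun v => a v i k) q
  frame_mem_SO3 : a q ∈ SO3
  rank_frame_eq_one : (Matrix.of fun (ik : Fin 3 × Fin 3) (j : Fin 3) =>
    pd j (fun v => a v ik.1 ik.2) q).rank = 1
  contDiffAt_position : ContDiffAt ℝ ∞ x q
  isUnit_det_Wmat : IsUnit (Wmat a x q).det
  structure_eq : ∀ i,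
    pd 0 (fun v => Wmat a x v i 1) q - pd 1 (fun v => Wmat a x v i 0) q = z (initCLM 2 q) i ∧
    pd 1 (fun v => Wmat a x v i 2) q - pd 2 (fun v => Wmat a x v i 1) q = 0 ∧
    pd 2 (fun v => Wmat a x v i 0) q - pd 0 (fun v => Wmat a x v i 2) q = 0

theorem cross_ne_zero_of_mulVec {A : Matrix (Fin 3) (Fin 3) ℝ} {v w : Fin 3 → ℝ}
    (hw : w ≠ 0) (hAw : A *ᵥ w = 0) (hAv : A *ᵥ v ≠ 0) : v ⨯₃ w ≠ 0 := by
  refine crossProduct_ne_zero_iff_linearIndependent.2 (LinearIndependent.pair_iff.2 fun r s h => ?_)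
  have hr : r • A *ᵥ v = 0 := by
    simpa [mulVec_add, mulVec_smul, hAw] using congrArg (A *ᵥ ·) h
  have hr0 : r = 0 := (smul_eq_zero.1 hr).resolve_right hAv
  refine ⟨hr0, (smul_eq_zero.1 ?_).resolve_right hw⟩
  simpa [hr0] using h

section

variable {α α' : ℝ → Matrix (Fin 3) (Fin 3) ℝ} {n : ℝ → Fin 3 → ℝ}
  {t : (Fin 2 → ℝ) → ℝ} {z : (Fin 2 → ℝ) → Fin 3 → ℝ}
  (hα : ∀ i j, ContDiff ℝ ∞ fun θ => α θ i j)
  (hα' : ∀ i j θ, HasDerivAt (fun θ => α θ i j) (α' θ i j) θ)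
  (hSO : ∀ θ, α θ ∈ SO3) (hn : ContDiff ℝ ∞ n) (hαn : ∀ θ, (α' θ)ᵀ *ᵥ n θ = 0)
include hα hα' hSO hn hαn

theorem isRankOneCoframingAt_ruled {y : (Fin 2 → ℝ) → Fin 3 → ℝ} {c : ℝ} {q : Fin 3 → ℝ}
    (ht : ContDiffAt ℝ ∞ t (initCLM 2 q)) (hdt : fderiv ℝ t (initCLM 2 q) ≠ 0)
    (hy : ContDiffAt ℝ ∞ y (initCLM 2 q)) (hz : z (initCLM 2 q) ≠ 0)
    (hyz : (α' (t (initCLM 2 q)))ᵀ *ᵥ wedgeCoeff 0 1 t y (initCLM 2 q) = z (initCLM 2 q))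
    (hdet : (jacobian (ruled y (n ∘ t) c) q).det ≠ 0) :
    IsRankOneCoframingAt z (α ∘ t ∘ initCLM 2) (ruled y (n ∘ t) c) q := by
  let T := t ∘ initCLM 2
  let x := ruled y (n ∘ t) c
  have hT : ContDiffAt ℝ ∞ T q := ht.comp q (initCLM 2).contDiff.contDiffAt
  have hTd := hT.differentiableAt (by simp)
  have hx : ContDiffAt ℝ ∞ x q := contDiffAt_ruled hy (hn.contDiffAt.comp _ ht)
  have htd := ht.differentiableAt (by simp)
  have hyd := hy.differentiableAt (by simp)
  have hnd : DifferentiableAt ℝ n (t (initCLM 2 q)) := hn.differentiable (by simp) _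
  have hW := pd_Wmat_sub_pd_Wmat hTd (hα' · · _) hx hSO
  refine ⟨fun i k => (hα i k).contDiffAt.comp q hT, hSO _,
    rank_pd_entry_comp hTd (hα' · · _) ?_ ?_, hx, (isUnit_det_Wmat_iff (hSO _)).2 hdet,
    fun i => ⟨?_, ?_, ?_⟩⟩
  · exact fun h0 => hz (by rw [← hyz, show α' (t (initCLM 2 q)) = 0 from h0, transpose_zero,
      zero_mulVec])
  · intro h0
    have hpd : ∀ i, pd i t (initCLM 2 q) = 0 := fun i => by
      rw [← pd_castSucc_comp_initCLM htd, pd, h0, _root_.zero_apply]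
    exact hdt (by ext v; simp [fderiv_apply_eq_sum_pd, hpd])
  · have h01 : wedgeCoeff 0 1 T x q = wedgeCoeff 0 1 t y (initCLM 2 q) :=
      wedgeCoeff_castSucc_ruled hyd htd hnd 0 1
    rw [hW, h01, ← hyz]
    rfl
  · have h12 : wedgeCoeff 1 2 T x q = pd 1 t (initCLM 2 q) • n (T q) :=
      wedgeCoeff_last_ruled hyd htd hnd 1
    rw [hW, h12, mulVec_smul, hαn, smul_zero, Pi.zero_apply]
  · have h02 : wedgeCoeff 0 2 T x q = pd 0 t (initCLM 2 q) • n (T q) :=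
      wedgeCoeff_last_ruled hyd htd hnd 0
    rw [hW, wedgeCoeff_swap, h02, mulVec_neg, mulVec_smul, hαn, smul_zero, neg_zero, Pi.zero_apply]

theorem exists_isRankOneCoframingAt (hn0 : ∀ θ, n θ ≠ 0) {G : (Fin 2 → ℝ) → Fin 3 → ℝ}
    {q₀ : Fin 3 → ℝ} (ht : ∀ᶠ p in 𝓝 (initCLM 2 q₀), ContDiffAt ℝ ∞ t p)
    (hdt : fderiv ℝ t (initCLM 2 q₀) ≠ 0)
    (hz : ∀ᶠ p in 𝓝 (initCLM 2 q₀), z p ≠ 0)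
    (hG : ∀ᶠ p in 𝓝 (initCLM 2 q₀), ContDiffAt ℝ ∞ G p)
    (hGz : ∀ᶠ p in 𝓝 (initCLM 2 q₀), (α' (t p))ᵀ *ᵥ G p = z p) :
    ∃ a x, ∀ᶠ q in 𝓝 q₀, IsRankOneCoframingAt z a x q := by
  have hGn := cross_ne_zero_of_mulVec (hn0 (t (initCLM 2 q₀))) (hαn _)
    (hGz.self_of_nhds ▸ hz.self_of_nhds)
  obtain ⟨y, hy, hyG, hdet₀⟩ := exists_wedgeCoeff_eq_of_cross_ne_zero ht hdt hG hGn
  let x := ruled y (n ∘ t) (q₀ 2)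
  have htn := hn.contDiffAt.comp _ ht.self_of_nhds
  have hx : ContDiffAt ℝ ∞ x q₀ := contDiffAt_ruled hy.self_of_nhds htn
  have hdet : (jacobian x q₀).det ≠ 0 := by
    have hyd := hy.self_of_nhds.differentiableAt (by simp)
    have htnd := htn.differentiableAt (by simp)
    have h0 : pd 0 x q₀ = _ := pd_castSucc_ruled hyd htnd 0
    have h1 : pd 1 x q₀ = _ := pd_castSucc_ruled hyd htnd 1
    have h2 : pd 2 x q₀ = _ := pd_last_ruled hyd htnd
    rw [show q₀ (Fin.last 2) = q₀ 2 from rfl, sub_self, zero_smul, add_zero] at h0 h1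
    rwa [det_jacobian_eq_dotProduct_cross, h0, h1, h2]
  have hproj := (initCLM 2).continuous.tendsto q₀
  have hdt' : ∀ᶠ p in 𝓝 (initCLM 2 q₀), fderiv ℝ t p ≠ 0 :=
    (ht.self_of_nhds.fderiv_right (m := ∞) le_rfl).continuousAt.eventually_ne hdt
  refine ⟨α ∘ t ∘ initCLM 2, x, ?_⟩
  filter_upwards [hproj.eventually (ht.and (hdt'.and (hy.and (hz.and (hGz.and hyG))))),
    (continuousAt_det_jacobian hx).eventually_ne hdet]
    with q ⟨htq, hdtq, hyq, hzq, hGzq, hyGq⟩ hdetq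
  exact isRankOneCoframingAt_ruled hα hα' hSO hn hαn htq hdtq hyq hzq (hyGq ▸ hGzq) hdetq

end

/-! ### Curves of rotations -/

section

open NormedSpace
open scoped Matrix.Norms.Operator

section

variable {𝔸 : Type*} [NormedRing 𝔸] [NormedAlgebra ℝ 𝔸] [CompleteSpace 𝔸]

theorem contDiff_exp_smul (A : 𝔸) : ContDiff ℝ ∞ fun θ : ℝ => exp (θ • A) :=
  contDiff_iff_contDiffAt.2 fun θ =>
    (exp_analytic (𝕂 := ℝ) (θ • A)).contDiffAt.comp θ (contDiff_id.smul contDiff_const).contDiffAt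

theorem hasDerivAt_exp_smul_mul_exp_smul (A B : 𝔸) (θ : ℝ) :
    HasDerivAt (fun θ : ℝ => exp (θ • A) * exp (θ • B))
      (exp (θ • A) * (A + B) * exp (θ • B)) θ := by
  convert (hasDerivAt_exp_smul_const A θ).fun_mul (hasDerivAt_exp_smul_const' B θ) using 1
  noncomm_ring

theorem exp_smul_mul_of_mul_mul_eq_neg {Y B : 𝔸} (hY : Y * (Y * B) = -B) (θ : ℝ) :
    exp (θ • Y) * B = Real.cos θ • B + Real.sin θ • (Y * B) := by
  let _ : NormedAlgebra ℚ 𝔸 := .restrictScalars ℚ ℝ 𝔸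
  let R : ℝ → 𝔸 := fun θ => Real.cos θ • B + Real.sin θ • (Y * B)
  have hR : ∀ θ, HasDerivAt R (Y * R θ) θ := fun θ => by
    refine (((Real.hasDerivAt_cos θ).smul_const B).fun_add
      ((Real.hasDerivAt_sin θ).smul_const (Y * B))).congr_deriv ?_
    simp only [R, mul_add, mul_smul_comm, hY]
    module
  have hconst : ∀ θ, HasDerivAt (fun θ : ℝ => exp (θ • -Y) * R θ) 0 θ := fun θ => by
    convert (hasDerivAt_exp_smul_const (-Y) θ).fun_mul (hR θ) using 1
    noncomm_ring
  have hB : exp (-(θ • Y)) * R θ = B := by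
    simpa [R] using is_const_of_deriv_eq_zero (fun θ => (hconst θ).differentiableAt)
      (fun θ => (hconst θ).deriv) θ 0
  calc exp (θ • Y) * B = exp (θ • Y) * exp (-(θ • Y)) * R θ := by rw [mul_assoc, hB]
    _ = R θ := by
      rw [← NormedSpace.exp_add_of_commute (Commute.refl _).neg_right, add_neg_cancel, exp_zero,
        one_mul]

end

theorem exp_smul_mulVec_of_mulVec_mulVec_eq_neg {m : Type*} [Fintype m] [DecidableEq m]
    {Y : Matrix m m ℝ} {v : m → ℝ} (hY : Y *ᵥ (Y *ᵥ v) = -v) (θ : ℝ) :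
    exp (θ • Y) *ᵥ v = Real.cos θ • v + Real.sin θ • (Y *ᵥ v) := by
  have hB : Y * (Y * vecMulVec v (1 : m → ℝ)) = -vecMulVec v 1 := by
    rw [mul_vecMulVec, mul_vecMulVec, hY, neg_vecMulVec]
  have h : exp (θ • Y) * vecMulVec v 1 = _ := exp_smul_mul_of_mul_mul_eq_neg hB θ
  rw [mul_vecMulVec, mul_vecMulVec] at h
  ext i
  simpa [vecMulVec_apply] using congrFun₂ h i i

theorem mul_mem_SO3 {A B : Matrix (Fin 3) (Fin 3) ℝ} (hA : A ∈ SO3) (hB : B ∈ SO3) :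
    A * B ∈ SO3 :=
  ⟨by rw [transpose_mul, Matrix.mul_assoc, ← Matrix.mul_assoc Aᵀ, hA.1, Matrix.one_mul, hB.1],
    by rw [det_mul, hA.2, hB.2, mul_one]⟩

theorem transpose_exp_smul_mul_exp_smul {m : Type*} [Fintype m] [DecidableEq m]
    {A : Matrix m m ℝ} (hA : Aᵀ = -A) (θ : ℝ) : (exp (θ • A))ᵀ * exp (θ • A) = 1 := by
  rw [← Matrix.exp_transpose, transpose_smul, hA, smul_neg,
    ← Matrix.exp_add_of_commute _ _ (Commute.refl (θ • A)).neg_left, neg_add_cancel, exp_zero]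

theorem exp_smul_mem_SO3 {A : Matrix (Fin 3) (Fin 3) ℝ} (hA : Aᵀ = -A) (θ : ℝ) :
    exp (θ • A) ∈ SO3 := by
  refine ⟨transpose_exp_smul_mul_exp_smul hA θ, ?_⟩
  let H := exp ((θ / 2) • A)
  have hH : exp (θ • A) = H * H := by
    rw [← Matrix.exp_add_of_commute _ _ (Commute.refl _), ← add_smul, add_halves]
  calc (exp (θ • A)).det = (Hᵀ * H).det := by rw [hH, det_mul, det_mul, det_transpose]
    _ = 1 := by rw [transpose_exp_smul_mul_exp_smul hA, det_one]

theorem mulVec_dotProduct_self_of_skew {m : Type*} [Fintype m] {A : Matrix m m ℝ} (hA : Aᵀ = -A)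
    (v : m → ℝ) : (A *ᵥ v) ⬝ᵥ v = 0 := by
  refine self_eq_neg.1 ?_
  conv_lhs => rw [dotProduct_comm, dotProduct_mulVec, ← mulVec_transpose, hA, neg_mulVec,
    neg_dotProduct]

theorem crossMat_mulVec (c w : Fin 3 → ℝ) : crossMat c *ᵥ w = w ⨯₃ c := by
  ext i
  fin_cases i <;> simp [crossMat, cross_apply, mulVec, dotProduct, Fin.sum_univ_three] <;> ring

theorem transpose_crossMat (c : Fin 3 → ℝ) : (crossMat c)ᵀ = -crossMat c := by
  ext i j
  fin_cases i <;> fin_cases j <;> simp [crossMat]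

theorem transpose_crossMat_mulVec_crossMat_mulVec (c w : Fin 3 → ℝ) :
    (crossMat c)ᵀ *ᵥ (crossMat c *ᵥ w) = (c ⬝ᵥ c) • w - (c ⬝ᵥ w) • c := by
  rw [transpose_crossMat, neg_mulVec, crossMat_mulVec, crossMat_mulVec]
  ext i
  fin_cases i <;> simp [cross_apply, vec3_dotProduct] <;> ring

theorem exists_skew_mulVec_of_cross_ne_zero {ζ η : Fin 3 → ℝ} (h : ζ ⨯₃ η ≠ 0) :
    ∃ (Y : Matrix (Fin 3) (Fin 3) ℝ) (c : Fin 3 → ℝ),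
      Yᵀ = -Y ∧ Y *ᵥ c = ζ ∧ Y *ᵥ ζ = -c ∧ c ⬝ᵥ η ≠ 0 := by
  let v := ζ ⨯₃ η
  have hv : 0 < v ⬝ᵥ v := by simpa using dotProduct_star_self_pos_iff.2 h
  have hs := Real.sq_sqrt hv.le
  let u := (√(v ⬝ᵥ v))⁻¹ • v
  have hu : u ⬝ᵥ u = 1 := by
    simp only [u, smul_dotProduct, dotProduct_smul, smul_eq_mul]
    field_simp
    exact hs.symm
  have huζ : u ⬝ᵥ ζ = 0 := by
    rw [dotProduct_comm, dotProduct_smul, dot_self_cross, smul_zero]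
  refine ⟨crossMat u, u ⨯₃ ζ, transpose_crossMat u, ?_, ?_, ?_⟩
  · have h := transpose_crossMat_mulVec_crossMat_mulVec u ζ
    rw [transpose_crossMat, neg_mulVec, ← mulVec_neg, crossMat_mulVec u ζ, cross_anticomm, hu,
      huζ] at h
    simpa using h
  · rw [crossMat_mulVec, cross_anticomm]
  · rw [dotProduct_comm, triple_product_permutation, smul_dotProduct]
    exact mul_ne_zero (inv_ne_zero (Real.sqrt_ne_zero'.2 hv)) hv.ne'

theorem exists_contDiffAt_cos_mul_eq_sin_mul {E : Type*} [NormedAddCommGroup E] [NormedSpace ℝ E]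
    {f g : E → ℝ} {p₀ : E} (hf : ∀ᶠ p in 𝓝 p₀, ContDiffAt ℝ ∞ f p)
    (hg : ∀ᶠ p in 𝓝 p₀, ContDiffAt ℝ ∞ g p) (hf0 : f p₀ = 0) (hg0 : g p₀ ≠ 0)
    (hdf : fderiv ℝ f p₀ ≠ 0) :
    ∃ t : E → ℝ, (∀ᶠ p in 𝓝 p₀, ContDiffAt ℝ ∞ t p) ∧ fderiv ℝ t p₀ ≠ 0 ∧
      ∀ᶠ p in 𝓝 p₀, Real.cos (t p) * f p = Real.sin (t p) * g p := by
  have hgne := hg.self_of_nhds.continuousAt.eventually_ne hg0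
  refine ⟨fun p => Real.arctan (f p * (g p)⁻¹), ?_, ?_, ?_⟩
  · filter_upwards [hf, hg, hgne] with p hfp hgp hgp0
    exact (hfp.mul (hgp.inv hgp0)).arctan
  · have hfd := (hf.self_of_nhds.differentiableAt (by simp)).hasFDerivAt
    have hgd := ((hg.self_of_nhds.inv hg0).differentiableAt (by simp)).hasFDerivAt
    change fderiv ℝ (fun p => Real.arctan ((f * g⁻¹) p)) p₀ ≠ 0
    rw [(hfd.mul hgd).arctan.fderiv]
    simpa [hf0] using ⟨hg0, hdf⟩
  · filter_upwards [hgne] with p hgp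
    rw [← Real.tan_mul_cos (Real.cos_arctan_pos _).ne', Real.tan_arctan]
    field_simp

section

variable {m E : Type*} [Fintype m] [NormedAddCommGroup E] [NormedSpace ℝ E] {p : E}

theorem contDiffAt_entry {M : E → Matrix m m ℝ} (hM : ContDiffAt ℝ ∞ M p)
    (i j : m) : ContDiffAt ℝ ∞ (fun p => M p i j) p := by
  classical
  exact (entryLinearMap ℝ ℝ i j).toContinuousLinearMap.contDiff.contDiffAt.comp p hM

theorem contDiffAt_mulVec {M : E → Matrix m m ℝ} {v : E → m → ℝ}
    (hM : ContDiffAt ℝ ∞ M p) (hv : ContDiffAt ℝ ∞ v p) :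
    ContDiffAt ℝ ∞ (fun p => M p *ᵥ v p) p :=
  contDiffAt_pi.2 fun i => ContDiffAt.sum fun j _ =>
    (contDiffAt_entry hM i j).mul (contDiffAt_pi.1 hv j)

end

section

variable (c : Fin 3 → ℝ) (Y : Matrix (Fin 3) (Fin 3) ℝ)

/-- The curve `α θ = exp (θ ([c] - Y)) exp (θ Y)`, in `SO(3)` for skew `Y`, through which the frame
factors. -/
def rotationCurve (θ : ℝ) : Matrix (Fin 3) (Fin 3) ℝ :=
  exp (θ • (crossMat c - Y)) * exp (θ • Y)

/-- The velocity `α' θ` of `rotationCurve c Y`. -/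
def rotationVelocity (θ : ℝ) : Matrix (Fin 3) (Fin 3) ℝ :=
  exp (θ • (crossMat c - Y)) * crossMat c * exp (θ • Y)

/-- The direction of the rulings of the position map, annihilated by `(α' θ)ᵀ` for skew `Y`. -/
def rulingDirection (θ : ℝ) : Fin 3 → ℝ :=
  exp (θ • (crossMat c - Y)) *ᵥ c

theorem contDiff_rotationCurve : ContDiff ℝ ∞ (rotationCurve c Y) :=
  (contDiff_exp_smul _).mul (contDiff_exp_smul Y)

theorem contDiff_rotationVelocity : ContDiff ℝ ∞ (rotationVelocity c Y) :=
  ((contDiff_exp_smul _).mul contDiff_const).mul (contDiff_exp_smul Y)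

theorem contDiff_rulingDirection : ContDiff ℝ ∞ (rulingDirection c Y) :=
  contDiff_iff_contDiffAt.2 fun _ =>
    contDiffAt_mulVec (contDiff_exp_smul _).contDiffAt contDiffAt_const

theorem hasDerivAt_rotationCurve_apply (i j : Fin 3) (θ : ℝ) :
    HasDerivAt (fun θ => rotationCurve c Y θ i j) (rotationVelocity c Y θ i j) θ := by
  have h := hasDerivAt_exp_smul_mul_exp_smul (crossMat c - Y) Y θ
  rw [sub_add_cancel] at h
  exact (entryLinearMap ℝ ℝ i j).toContinuousLinearMap.hasFDerivAt.comp_hasDerivAt θ h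

variable {c Y} (hY : Yᵀ = -Y)
include hY

theorem transpose_crossMat_sub : (crossMat c - Y)ᵀ = -(crossMat c - Y) := by
  rw [transpose_sub, transpose_crossMat, hY, neg_sub_neg, neg_sub]

theorem rotationCurve_mem_SO3 (θ : ℝ) : rotationCurve c Y θ ∈ SO3 :=
  mul_mem_SO3 (exp_smul_mem_SO3 (transpose_crossMat_sub hY) θ) (exp_smul_mem_SO3 hY θ)

theorem rulingDirection_ne_zero (hc : c ≠ 0) (θ : ℝ) : rulingDirection c Y θ ≠ 0 := by
  intro h
  refine hc ?_
  rw [← one_mulVec c, ← transpose_exp_smul_mul_exp_smul (transpose_crossMat_sub hY) θ,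
    ← mulVec_mulVec, ← rulingDirection, h, mulVec_zero]

theorem transpose_rotationVelocity_mulVec_exp (θ : ℝ) (w : Fin 3 → ℝ) :
    (rotationVelocity c Y θ)ᵀ *ᵥ (exp (θ • (crossMat c - Y)) *ᵥ w) =
      (exp (θ • Y))ᵀ *ᵥ ((crossMat c)ᵀ *ᵥ w) := by
  simp only [rotationVelocity, transpose_mul, mulVec_mulVec, Matrix.mul_assoc,
    transpose_exp_smul_mul_exp_smul (transpose_crossMat_sub hY), Matrix.mul_one]

theorem transpose_rotationVelocity_mulVec_rulingDirection (θ : ℝ) :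
    (rotationVelocity c Y θ)ᵀ *ᵥ rulingDirection c Y θ = 0 := by
  rw [rulingDirection, transpose_rotationVelocity_mulVec_exp hY, transpose_crossMat, neg_mulVec,
    crossMat_mulVec, cross_self, neg_zero, mulVec_zero]

theorem transpose_rotationVelocity_mulVec_mulVec {θ : ℝ} {w : Fin 3 → ℝ}
    (hw : c ⬝ᵥ (exp (θ • Y) *ᵥ w) = 0) :
    (rotationVelocity c Y θ)ᵀ *ᵥ (rotationVelocity c Y θ *ᵥ w) = (c ⬝ᵥ c) • w := by
  conv_lhs => rw [rotationVelocity, ← mulVec_mulVec, ← mulVec_mulVec, ← rotationVelocity]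
  rw [transpose_rotationVelocity_mulVec_exp hY, transpose_crossMat_mulVec_crossMat_mulVec, hw,
    zero_smul, sub_zero, mulVec_smul, mulVec_mulVec, transpose_exp_smul_mul_exp_smul hY, one_mulVec]

theorem exists_isRankOneCoframingAt_of_skew (hc : c ≠ 0) {t : (Fin 2 → ℝ) → ℝ}
    {z : (Fin 2 → ℝ) → Fin 3 → ℝ} {q₀ : Fin 3 → ℝ}
    (ht : ∀ᶠ p in 𝓝 (initCLM 2 q₀), ContDiffAt ℝ ∞ t p) (hdt : fderiv ℝ t (initCLM 2 q₀) ≠ 0)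
    (hz : ∀ᶠ p in 𝓝 (initCLM 2 q₀), ContDiffAt ℝ ∞ z p)
    (hz0 : z (initCLM 2 q₀) ≠ 0)
    (hcz : ∀ᶠ p in 𝓝 (initCLM 2 q₀), c ⬝ᵥ (exp (t p • Y) *ᵥ z p) = 0) :
    ∃ a x, ∀ᶠ q in 𝓝 q₀, IsRankOneCoframingAt z a x q := by
  let G (p : Fin 2 → ℝ) := (c ⬝ᵥ c)⁻¹ • (rotationVelocity c Y (t p) *ᵥ z p)
  have hG : ∀ᶠ p in 𝓝 (initCLM 2 q₀), ContDiffAt ℝ ∞ G p := by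
    filter_upwards [ht, hz] with p htp hzp
    have hvel := (contDiff_rotationVelocity c Y).contDiffAt.comp p htp
    exact (contDiffAt_mulVec hvel hzp).const_smul _
  have hGz : ∀ᶠ p in 𝓝 (initCLM 2 q₀), (rotationVelocity c Y (t p))ᵀ *ᵥ G p = z p := by
    filter_upwards [hcz] with p hp
    rw [mulVec_smul, transpose_rotationVelocity_mulVec_mulVec hY hp,
      inv_smul_smul₀ (dotProduct_self_eq_zero.not.2 hc)]
  exact exists_isRankOneCoframingAt
    (fun i j => contDiff_iff_contDiffAt.2 fun _ =>
      contDiffAt_entry (contDiff_rotationCurve c Y).contDiffAt i j)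
    (hasDerivAt_rotationCurve_apply c Y) (rotationCurve_mem_SO3 hY) (contDiff_rulingDirection c Y)
    (transpose_rotationVelocity_mulVec_rulingDirection hY) (rulingDirection_ne_zero hY hc)
    ht hdt (hz.self_of_nhds.continuousAt.eventually_ne hz0) hG hGz

end

/-! ### Local solvability -/

section

variable {z : (Fin 2 → ℝ) → Fin 3 → ℝ} {q₀ : Fin 3 → ℝ}
  (hz : ∀ᶠ p in 𝓝 (initCLM 2 q₀), ContDiffAt ℝ ∞ z p)
include hz

theorem exists_isRankOneCoframingAt_of_dotProduct_eq_zero (hz0 : z (initCLM 2 q₀) ≠ 0)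
    {c : Fin 3 → ℝ} (hc : c ≠ 0) (hcz : ∀ᶠ p in 𝓝 (initCLM 2 q₀), c ⬝ᵥ z p = 0) :
    ∃ a x, ∀ᶠ q in 𝓝 q₀, IsRankOneCoframingAt z a x q := by
  let t : (Fin 2 → ℝ) →L[ℝ] ℝ := .proj 0
  have hdt : fderiv ℝ t (initCLM 2 q₀) ≠ 0 := by
    rw [t.fderiv]
    exact fun h => one_ne_zero (DFunLike.congr_fun h 1 : (1 : ℝ) = 0)
  refine exists_isRankOneCoframingAt_of_skew (Y := 0) (t := t) (by simp) hc
    (.of_forall fun _ => t.contDiff.contDiffAt) hdt hz hz0 ?_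
  simpa using hcz

theorem exists_isRankOneCoframingAt_of_cross_fderiv_ne_zero {w : Fin 2 → ℝ}
    (hw : z (initCLM 2 q₀) ⨯₃ fderiv ℝ z (initCLM 2 q₀) w ≠ 0) :
    ∃ a x, ∀ᶠ q in 𝓝 q₀, IsRankOneCoframingAt z a x q := by
  obtain ⟨Y, c, hY, hYc, hYζ, hcη⟩ := exists_skew_mulVec_of_cross_ne_zero hw
  set ζ := z (initCLM 2 q₀)
  have hζ : ζ ≠ 0 := fun h => hw (by rw [h, LinearMap.map_zero₂])
  have hc : c ≠ 0 := fun h => hcη (by rw [h, zero_dotProduct])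
  have hcζ : c ⬝ᵥ ζ = 0 := by
    simpa [hYζ] using mulVec_dotProduct_self_of_skew hY ζ
  let L (v : Fin 3 → ℝ) := (dotProductBilin ℝ ℝ v).toContinuousLinearMap
  have hL (v : Fin 3 → ℝ) : ∀ᶠ p in 𝓝 (initCLM 2 q₀), ContDiffAt ℝ ∞ (fun p => v ⬝ᵥ z p) p :=
    hz.mono fun p hp => (L v).contDiff.contDiffAt.comp p hp
  have hdc : fderiv ℝ (fun p => c ⬝ᵥ z p) (initCLM 2 q₀) ≠ 0 := by
    have hzd := (hz.self_of_nhds.differentiableAt (by simp)).hasFDerivAt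
    intro h0
    exact hcη (DFunLike.congr_fun (((L c).hasFDerivAt.comp _ hzd).fderiv.symm.trans h0) w)
  obtain ⟨t, ht, hdt, htz⟩ := exists_contDiffAt_cos_mul_eq_sin_mul (hL c) (hL ζ) hcζ
    (dotProduct_self_eq_zero.not.2 hζ) hdc
  refine exists_isRankOneCoframingAt_of_skew hY hc ht hdt hz hζ ?_
  filter_upwards [htz] with p hp
  have hYY : (-Y) *ᵥ ((-Y) *ᵥ c) = -c := by
    rw [neg_mulVec, neg_mulVec, mulVec_neg, neg_neg, hYc, hYζ]
  rw [dotProduct_mulVec, ← mulVec_transpose, ← Matrix.exp_transpose, transpose_smul, hY,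
    exp_smul_mulVec_of_mulVec_mulVec_eq_neg hYY, neg_mulVec, hYc, add_dotProduct, smul_dotProduct,
    smul_dotProduct, neg_dotProduct, smul_eq_mul, smul_eq_mul, hp]
  ring

end

end

end

/-- Theorem 4.9 of the paper. For `Ω = z(u¹,u²) du¹ ∧ du²` with `z`
nonvanishing, if the projectivization `[[z]]` has image in a line or has nonvanishing
differential, then locally there exist `a : U → SO(3)` of rank 1 and `x : U → ℝ³`
such that `ω = a⁻¹ dx` is a coframing with `dω = Ω`. -/
theorem rank_one_local_solvability
    (V : Set (Fin 2 → ℝ)) (hV : IsOpen V)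
    (z : (Fin 2 → ℝ) → (Fin 3 → ℝ)) (hz : ContDiffOn ℝ (⊤ : ℕ∞) z V)
    (hz0 : ∀ p ∈ V, z p ≠ 0)
    (hcase :
      (∃ c : Fin 3 → ℝ, c ≠ 0 ∧ ∀ p ∈ V, c ⬝ᵥ z p = 0) ∨
      (∀ p ∈ V, ∃ w : Fin 2 → ℝ, crossProduct (z p) (fderiv ℝ z p w) ≠ 0)) :
    ∀ q₀ : Fin 3 → ℝ, (fun i : Fin 2 => q₀ i.castSucc) ∈ V →
      ∃ U : Set (Fin 3 → ℝ), IsOpen U ∧ q₀ ∈ U ∧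
        (∀ q ∈ U, (fun i : Fin 2 => q i.castSucc) ∈ V) ∧
        ∃ (a : (Fin 3 → ℝ) → Matrix (Fin 3) (Fin 3) ℝ)
          (x : (Fin 3 → ℝ) → (Fin 3 → ℝ)),
          (∀ i k : Fin 3, ContDiffOn ℝ (⊤ : ℕ∞) (fun q => a q i k) U) ∧
          (∀ q ∈ U, a q ∈ SO3) ∧
          (∀ q ∈ U, (Matrix.of fun (ik : Fin 3 × Fin 3) (j : Fin 3) =>
              pd j (fun v => a v ik.1 ik.2) q).rank = 1) ∧
          ContDiffOn ℝ (⊤ : ℕ∞) x U ∧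
          (∀ q ∈ U, IsUnit (Wmat a x q).det) ∧
          (∀ q ∈ U, ∀ i : Fin 3,
            pd 0 (fun v => Wmat a x v i 1) q - pd 1 (fun v => Wmat a x v i 0) q
                = z (fun i' : Fin 2 => q i'.castSucc) i ∧
            pd 1 (fun v => Wmat a x v i 2) q - pd 2 (fun v => Wmat a x v i 1) q = 0 ∧
            pd 2 (fun v => Wmat a x v i 0) q - pd 0 (fun v => Wmat a x v i 2) q
                = 0) := by
  intro q₀ hq₀
  have hVn : ∀ᶠ p in nhds (initCLM 2 q₀), p ∈ V := hV.mem_nhds hq₀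
  have hzs : ∀ᶠ p in nhds (initCLM 2 q₀), ContDiffAt ℝ (⊤ : ℕ∞) z p :=
    hVn.mono fun p hp => hz.contDiffAt (hV.mem_nhds hp)
  obtain ⟨a, x, hax⟩ : ∃ a x, ∀ᶠ q in nhds q₀, IsRankOneCoframingAt z a x q := by
    rcases hcase with ⟨c, hc, hcz⟩ | himm
    · exact exists_isRankOneCoframingAt_of_dotProduct_eq_zero hzs (hz0 _ hq₀) hc (hVn.mono hcz)
    · obtain ⟨w, hw⟩ := himm _ hq₀
      exact exists_isRankOneCoframingAt_of_cross_fderiv_ne_zero hzs hw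
  obtain ⟨U, hU, hUo, hq₀U⟩ := eventually_nhds_iff.1
    (hax.and ((initCLM 2).continuous.continuousAt.eventually hVn))
  exact ⟨U, hUo, hq₀U, fun q hq => (hU q hq).2, a, x,
    fun i k q hq => ((hU q hq).1.contDiffAt_frame i k).contDiffWithinAt,
    fun q hq => (hU q hq).1.frame_mem_SO3,
    fun q hq => (hU q hq).1.rank_frame_eq_one,
    fun q hq => (hU q hq).1.contDiffAt_position.contDiffWithinAt,
    fun q hq => (hU q hq).1.isUnit_det_Wmat,
    fun q hq => (hU q hq).1.structure_eq⟩
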